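/- Let Σ ∈ ℂ^{n×n} be Hermitian positive definite and G ∈ ℂ^{n×K}. Then for every d and every W ∈ ℂ^{d×n} such that W Σ W^H is invertible, the determinants det(I_d + W G G^H W^H (W Σ W^H)^{-1}) and det(I_K + G^H Σ^{-1} G) are real numbers and det(I_d + W G G^H W^H (W Σ W^H)^{-1}) ≤ det(I_K + G^H Σ^{-1} G). -/

import Mathlib

open Matrix
open scoped ComplexOrder

/-!
Put `P = Wᴴ (W Σ Wᴴ)⁻¹ W`. By the Weinstein–Aronszajn identity the left-hand determinant is
`det (1 + Gᴴ P G)`. Since the block matrix `[Σ⁻¹ Wᴴ; W WΣWᴴ]` has Schur complement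
`WΣWᴴ - W (Σ⁻¹)⁻¹ Wᴴ = 0` over its upper left corner, it is positive semidefinite, so its other
Schur complement `Σ⁻¹ - P` is positive semidefinite as well: `P ≤ Σ⁻¹` in the Loewner order. The
determinant is monotone on positive semidefinite matrices, because
`det (A + Cᴴ C) = det A * det (1 + C A⁻¹ Cᴴ)` for invertible `A`, and the second factor is a product
of numbers `1 + λᵢ ≥ 1`.
-/

lemma det_one_add_mul_mul_mul_mul_comm {R m n k : Type*} [CommRing R] [Fintype m] [DecidableEq m]
    [Fintype n] [Fintype k] [DecidableEq k] (W : Matrix m n R) (G : Matrix n k R)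
    (H : Matrix k n R) (V : Matrix n m R) (T : Matrix m m R) :
    (1 + W * G * H * V * T).det = (1 + H * (V * T * W) * G).det := by
  simpa only [Matrix.mul_assoc] using det_one_add_mul_comm (W * G) (H * V * T)

section Loewner

open scoped MatrixOrder

variable {𝕜 m n k : Type*} [RCLike 𝕜] [Fintype m] [DecidableEq m] [Fintype n] [Fintype k]
  [DecidableEq k]

lemma det_one_add_eq_prod_eigenvalues {A : Matrix k k 𝕜} (hA : A.IsHermitian) :
    (1 + A).det = ∏ i, (1 + (hA.eigenvalues i : 𝕜)) := by
  have h_diag : 1 + A = Unitary.conjStarAlgAut 𝕜 _ hA.eigenvectorUnitary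
      (1 + diagonal (RCLike.ofReal ∘ hA.eigenvalues)) := by
    rw [map_add, map_one, ← hA.spectral_theorem]
  rw [h_diag, Unitary.conjStarAlgAut_apply, det_mul_right_comm,
    Unitary.mul_star_self_of_mem (SetLike.coe_mem _), one_mul, ← diagonal_one, diagonal_add,
    det_diagonal]
  rfl

lemma one_le_det_one_add_of_nonneg {A : Matrix k k 𝕜} (hA : 0 ≤ A) : 1 ≤ (1 + A).det := by
  have hA_psd : A.PosSemidef := hA.posSemidef
  have h_prod : 1 ≤ ∏ i, (1 + hA_psd.isHermitian.eigenvalues i) :=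
    Finset.one_le_prod fun i _ ↦ le_add_of_nonneg_right (hA_psd.eigenvalues_nonneg i)
  rw [det_one_add_eq_prod_eigenvalues hA_psd.isHermitian]
  exact_mod_cast h_prod

lemma det_le_det_of_nonneg_of_le {A B : Matrix k k 𝕜} (hA : 0 ≤ A) (hAB : A ≤ B) :
    A.det ≤ B.det := by
  have hA_psd : A.PosSemidef := hA.posSemidef
  by_cases h_det : A.det = 0
  · exact h_det ▸ (hA.trans hAB).posSemidef.det_nonneg
  obtain ⟨C, hC⟩ : ∃ C : Matrix k k 𝕜, B - A = Cᴴ * C :=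
    CStarAlgebra.nonneg_iff_eq_star_mul_self.mp (sub_nonneg.mpr hAB)
  have h_one_le : 1 ≤ (1 + C * A⁻¹ * Cᴴ).det :=
    one_le_det_one_add_of_nonneg (hA_psd.inv.mul_mul_conjTranspose_same C).nonneg
  calc A.det ≤ A.det * (1 + C * A⁻¹ * Cᴴ).det :=
        le_mul_of_one_le_right hA_psd.det_nonneg h_one_le
    _ = (A + Cᴴ * C).det := (det_add_mul _ _ (isUnit_iff_ne_zero.mpr h_det)).symm
    _ = B.det := by rw [← hC, add_sub_cancel]

lemma det_one_add_conjTranspose_mul_mul_le_of_le {P Q : Matrix n n 𝕜} (hP : 0 ≤ P) (hPQ : P ≤ Q)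
    (G : Matrix n k 𝕜) : (1 + Gᴴ * P * G).det ≤ (1 + Gᴴ * Q * G).det := by
  apply det_le_det_of_nonneg_of_le
  · exact (PosSemidef.one.add (hP.posSemidef.conjTranspose_mul_mul_same G)).nonneg
  · have h_psd := (le_iff.mp hPQ).conjTranspose_mul_mul_same G
    rw [Matrix.mul_sub, Matrix.sub_mul] at h_psd
    exact add_le_add_right (le_iff.mpr h_psd) 1

variable [DecidableEq n]

lemma conjTranspose_mul_inv_mul_le_inv {S : Matrix n n 𝕜} (hS : S.PosDef) {W : Matrix m n 𝕜}
    (hW : IsUnit (W * S * Wᴴ)) : Wᴴ * (W * S * Wᴴ)⁻¹ * W ≤ S⁻¹ := by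
  have hT : (W * S * Wᴴ).PosDef :=
    (hS.posSemidef.mul_mul_conjTranspose_same W).posDef_iff_isUnit.mpr hW
  have := hS.isUnit.invertible
  have := hW.invertible
  have h_block : (fromBlocks S⁻¹ Wᴴ Wᴴᴴ (W * S * Wᴴ)).PosSemidef := by
    rw [hS.inv.fromBlocks₁₁, inv_inv_of_invertible, conjTranspose_conjTranspose, sub_self]
    exact .zero
  simpa only [conjTranspose_conjTranspose] using le_iff.mpr ((hT.fromBlocks₂₂ _ _).mp h_block)

theorem stmt_15_general {S : Matrix n n 𝕜} (hS : S.PosDef) (G : Matrix n k 𝕜)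
    {W : Matrix m n 𝕜} (hW : IsUnit (W * S * Wᴴ)) :
    ∃ r s : ℝ,
      (1 + W * G * Gᴴ * Wᴴ * (W * S * Wᴴ)⁻¹).det = (r : 𝕜) ∧
      (1 + Gᴴ * S⁻¹ * G).det = (s : 𝕜) ∧ r ≤ s := by
  have hP : (Wᴴ * (W * S * Wᴴ)⁻¹ * W).PosSemidef :=
    (hS.posSemidef.mul_mul_conjTranspose_same W).inv.conjTranspose_mul_mul_same W
  have h_nonneg : 0 ≤ (1 + Gᴴ * (Wᴴ * (W * S * Wᴴ)⁻¹ * W) * G).det :=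
    (PosSemidef.one.add (hP.conjTranspose_mul_mul_same G)).det_nonneg
  have h_le := det_one_add_conjTranspose_mul_mul_le_of_le hP.nonneg
    (conjTranspose_mul_inv_mul_le_inv hS hW) G
  obtain ⟨r, -, hr⟩ := RCLike.nonneg_iff_exists_ofReal.mp h_nonneg
  obtain ⟨s, -, hs⟩ := RCLike.nonneg_iff_exists_ofReal.mp (h_nonneg.trans h_le)
  rw [← hr, ← hs, RCLike.ofReal_le_ofReal] at h_le
  exact ⟨r, s, (det_one_add_mul_mul_mul_mul_comm ..).trans hr.symm, hs.symm, h_le⟩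

end Loewner

/-- Pointwise comparison underlying Corollary 1 and Proposition 1: with `Σ ≻ 0`,
`G : ℂ^{n×K}`, and any `W : ℂ^{d×n}` with `W Σ Wᴴ` invertible, the determinants
`det(I_d + W G Gᴴ Wᴴ (W Σ Wᴴ)⁻¹)` and `det(I_K + Gᴴ Σ⁻¹ G)` are real numbers and the
former is at most the latter. -/
theorem stmt_15 (n K : ℕ)
    (S : Matrix (Fin n) (Fin n) ℂ) (hS : S.PosDef)
    (G : Matrix (Fin n) (Fin K) ℂ)
    (d : ℕ) (W : Matrix (Fin d) (Fin n) ℂ) (hW : IsUnit (W * S * Wᴴ)) :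
    ∃ r s : ℝ,
      (1 + W * G * Gᴴ * Wᴴ * (W * S * Wᴴ)⁻¹).det = (r : ℂ) ∧
      (1 + Gᴴ * S⁻¹ * G).det = (s : ℂ) ∧ r ≤ s :=
  stmt_15_general hS G hW
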